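/- Let μ be a compactly supported Borel measure on ℝ^d, d ≥ 2, and suppose I_s(μ) < ∞ for some s > (d+1)/2. Then the Mattila integral of μ is finite: ∫_0^∞ ( ∫_{S^{d−1}} |μ̂(tω)|² dω )² t^{d−1} dt < ∞. -/

import Mathlib

open MeasureTheory Metric Set Topology
open scoped ENNReal

noncomputable section

/-- `ℝ^d` as Euclidean space. -/
abbrev Pt (d : ℕ) := EuclideanSpace ℝ (Fin d)

/-- The Fourier transform `μ̂(ξ) = ∫ e^{-2πi x·ξ} dμ(x)` of a measure `μ` on `ℝ^d`. -/
def ftM (d : ℕ) (μ : Measure (Pt d)) (ξ : Pt d) : ℂ :=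
  ∫ x, Complex.exp ((-(2 * Real.pi * (inner ℝ x ξ : ℝ)) : ℝ) * Complex.I) ∂μ

/-- The `s`-energy `I_s(μ) = ∬ |x-y|^{-s} dμ(x) dμ(y)` of a measure `μ`. -/
def energy (d : ℕ) (s : ℝ) (μ : Measure (Pt d)) : ℝ≥0∞ :=
  ∫⁻ x, ∫⁻ y, edist x y ^ (-s) ∂μ ∂μ

/-- The surface measure `dω` on the unit sphere `S^{d-1} ⊆ ℝ^d`. -/
def sphM (d : ℕ) : Measure (sphere (0 : Pt d) 1) :=
  (volume : Measure (Pt d)).toSphere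

/-- The spherical `L²` average `∫_{S^{d-1}} |μ̂(tω)|² dω` (as a lower integral). -/
def sphAvg (d : ℕ) (μ : Measure (Pt d)) (t : ℝ) : ℝ≥0∞ :=
  ∫⁻ ω, (‖ftM d μ (t • (ω : Pt d))‖₊ : ℝ≥0∞) ^ 2 ∂(sphM d)

/-- The Mattila integral `∫_0^∞ (∫_{S^{d-1}} |μ̂(tω)|² dω)² t^{d-1} dt`. -/
def mattila (d : ℕ) (μ : Measure (Pt d)) : ℝ≥0∞ :=
  ∫⁻ t in Ioi (0 : ℝ), (sphAvg d μ t) ^ 2 * ENNReal.ofReal (t ^ ((d : ℝ) - 1))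


open scoped ComplexConjugate

def kerE (d : ℕ) (x ξ : Pt d) : ℂ :=
  Complex.exp ((-(2 * Real.pi * (inner ℝ x ξ : ℝ)) : ℝ) * Complex.I)

def FTh (d : ℕ) (μ : Measure (Pt d)) (h : Pt d → ℝ) (ξ : Pt d) : ℂ :=
  ∫ x, (h x : ℂ) * kerE d x ξ ∂μ

lemma norm_kerE (d : ℕ) (x ξ : Pt d) : ‖kerE d x ξ‖ = 1 := by
  unfold kerE
  exact Complex.norm_exp_ofReal_mul_I _

lemma continuous_kerE (d : ℕ) : Continuous (fun p : Pt d × Pt d => kerE d p.1 p.2) := by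
  unfold kerE
  fun_prop

lemma continuous_FTh (d : ℕ) (μ : Measure (Pt d)) [IsFiniteMeasure μ] (h : Pt d → ℝ)
    (hm : Continuous h) (M : ℝ) (hM : ∀ᵐ x ∂μ, |h x| ≤ M) : Continuous (FTh d μ h) := by
  unfold FTh
  refine continuous_of_dominated (bound := fun _ => M) ?_ ?_ (integrable_const _) ?_
  · intro ξ
    have := (continuous_kerE d).comp (Continuous.prodMk_left ξ)
    exact ((Complex.continuous_ofReal.comp hm).mul this).aestronglyMeasurable
  · intro ξ
    filter_upwards [hM] with x hx
    rw [norm_mul, norm_kerE]; simpa using hx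
  · refine Filter.Eventually.of_forall fun x => ?_
    exact continuous_const.mul ((continuous_kerE d).comp (Continuous.prodMk_right x))

lemma FTh_sq (d : ℕ) (μ : Measure (Pt d)) [IsFiniteMeasure μ] (h : Pt d → ℝ) (ξ : Pt d) :
    ((‖FTh d μ h ξ‖ ^ 2 : ℝ) : ℂ) =
      ∫ p, (h p.1 : ℂ) * (h p.2 : ℂ) * kerE d (p.1 - p.2) ξ ∂(μ.prod μ) := by
  have h1 : ((‖FTh d μ h ξ‖ ^ 2 : ℝ) : ℂ) = FTh d μ h ξ * conj (FTh d μ h ξ) := by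
    rw [Complex.mul_conj, Complex.normSq_eq_norm_sq]
  rw [h1]
  unfold FTh
  rw [← integral_conj, ← integral_prod_mul]
  refine integral_congr_ae (Filter.Eventually.of_forall fun p => ?_)
  simp only [map_mul, Complex.conj_ofReal, kerE, ← Complex.exp_conj, Complex.conj_I]
  have : ∀ a b c e : ℂ, a * b * (c * e) = a * c * (b * e) := by intros; ring
  rw [this, ← Complex.exp_add]
  congr 2
  rw [inner_sub_left]
  push_cast
  ring

lemma gauss_ft (d : ℕ) (b : ℝ) (hb : 0 < b) (w : Pt d) :
    ∫ ξ, kerE d w ξ * (Real.exp (-(‖ξ‖ ^ 2 / b)) : ℂ) =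
      ((Real.pi * b) ^ ((d : ℝ) / 2) * Real.exp (-(Real.pi ^ 2 * ‖w‖ ^ 2 * b)) : ℝ) := by
  have hb' : 0 < ((1 / b : ℝ) : ℂ).re := by rw [Complex.ofReal_re]; positivity
  have := GaussianFourier.integral_cexp_neg_mul_sq_norm_add hb' (-(2 * Real.pi * Complex.I)) w
  rw [finrank_euclideanSpace_fin] at this
  have hbc : (b : ℂ) ≠ 0 := by exact_mod_cast hb.ne'
  have e1 : ∀ ξ : Pt d, kerE d w ξ * (Real.exp (-(‖ξ‖ ^ 2 / b)) : ℂ) =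
      Complex.exp (-((1 / b : ℝ) : ℂ) * ‖ξ‖ ^ 2 + (-(2 * Real.pi * Complex.I)) * (inner ℝ w ξ : ℝ)) := by
    intro ξ
    unfold kerE
    rw [Complex.ofReal_exp, ← Complex.exp_add]
    congr 1
    push_cast
    field_simp
    ring
  simp_rw [e1]
  rw [this]
  rw [Complex.ofReal_mul, Complex.ofReal_exp, Complex.ofReal_cpow (by positivity)]
  congr 2
  · push_cast
    field_simp
  · push_cast
    rfl
  · push_cast
    field_simp
    rw [Complex.I_sq]; ring

lemma gauss_int (d : ℕ) (b : ℝ) (hb : 0 < b) :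
    Integrable (fun ξ : Pt d => Real.exp (-(‖ξ‖ ^ 2 / b))) := by
  have hb' : 0 < ((1 / b : ℝ) : ℂ).re := by rw [Complex.ofReal_re]; positivity
  have := (GaussianFourier.integrable_cexp_neg_mul_sq_norm_add hb' 0 (0 : Pt d)).norm
  refine this.congr (Filter.Eventually.of_forall fun ξ => ?_)
  simp only [Complex.norm_exp]
  congr 1
  simp [← Complex.ofReal_pow]
  field_simp

lemma gauss_bound (d : ℕ) (μ : Measure (Pt d)) [IsFiniteMeasure μ] (h : Pt d → ℝ)
    (hm : Continuous h) (M : ℝ) (hM0 : 0 ≤ M) (hM : ∀ᵐ x ∂μ, |h x| ≤ M) (b : ℝ) (hb : 0 < b) :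
    ∫⁻ ξ, ‖FTh d μ h ξ‖ₑ ^ 2 * ENNReal.ofReal (Real.exp (-(‖ξ‖ ^ 2 / b))) ≤
      ∫⁻ x, ∫⁻ y, ENNReal.ofReal (M ^ 2 * ((Real.pi * b) ^ ((d : ℝ) / 2) *
        Real.exp (-(Real.pi ^ 2 * ‖x - y‖ ^ 2 * b)))) ∂μ ∂μ := by
  set P : Pt d → Pt d × Pt d → ℂ := fun ξ p =>
    (h p.1 : ℂ) * (h p.2 : ℂ) * (kerE d (p.1 - p.2) ξ * (Real.exp (-(‖ξ‖ ^ 2 / b)) : ℂ)) with hP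
  have hMM : ∀ᵐ p ∂(μ.prod μ), |h p.1| * |h p.2| ≤ M ^ 2 := by
    have h1 : ∀ᵐ p ∂(μ.prod μ), |h p.1| ≤ M := Measure.quasiMeasurePreserving_fst.ae hM
    have h2 : ∀ᵐ p ∂(μ.prod μ), |h p.2| ≤ M := Measure.quasiMeasurePreserving_snd.ae hM
    filter_upwards [h1, h2] with p a c
    rw [sq]
    exact mul_le_mul a c (abs_nonneg _) hM0
  have hcont : Continuous (Function.uncurry P) := by
    simp only [hP, Function.uncurry_def, kerE]
    fun_prop
  have hPint : Integrable (Function.uncurry P) (volume.prod (μ.prod μ)) := by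
    have := (gauss_int d b hb).mul_prod (integrable_const (M ^ 2) : Integrable _ (μ.prod μ))
    refine this.mono' hcont.aestronglyMeasurable ?_
    have h3 : ∀ᵐ q ∂((volume : Measure (Pt d)).prod (μ.prod μ)), |h q.2.1| * |h q.2.2| ≤ M ^ 2 :=
      Measure.quasiMeasurePreserving_snd.ae hMM
    filter_upwards [h3] with q hq
    simp only [hP, Function.uncurry_def, norm_mul, norm_kerE, Complex.norm_real, Real.norm_eq_abs,
      Real.abs_exp, one_mul]
    rw [mul_comm]
    gcongr
  have hpt : ∀ ξ, ((‖FTh d μ h ξ‖ ^ 2 * Real.exp (-(‖ξ‖ ^ 2 / b)) : ℝ) : ℂ) =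
      ∫ p, P ξ p ∂(μ.prod μ) := by
    intro ξ
    rw [Complex.ofReal_mul, FTh_sq, ← integral_mul_const]
    simp only [hP]
    congr 1; ext p; ring
  have hintg : Integrable (fun ξ => ‖FTh d μ h ξ‖ ^ 2 * Real.exp (-(‖ξ‖ ^ 2 / b))) := by
    have h1 := hPint.integral_prod_left.re
    refine h1.congr (Filter.Eventually.of_forall fun ξ => ?_)
    simp only [Function.uncurry]
    rw [← hpt]; simp only [RCLike.re_to_complex, Complex.ofReal_re]
  have hl : ∫⁻ ξ, ‖FTh d μ h ξ‖ₑ ^ 2 * ENNReal.ofReal (Real.exp (-(‖ξ‖ ^ 2 / b))) =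
      ‖∫ ξ, ∫ p, P ξ p ∂(μ.prod μ)‖ₑ := by
    simp_rw [← hpt]
    rw [integral_complex_ofReal]
    rw [← ofReal_norm, Complex.norm_real, Real.norm_eq_abs,
      abs_of_nonneg (integral_nonneg fun ξ => by positivity),
      ofReal_integral_eq_lintegral_ofReal hintg (Filter.Eventually.of_forall fun ξ => by positivity)]
    refine lintegral_congr fun ξ => ?_
    rw [ENNReal.ofReal_mul (by positivity), ENNReal.ofReal_pow (by positivity), ofReal_norm]
  rw [hl, integral_integral_swap hPint]
  refine (enorm_integral_le_lintegral_enorm _).trans ?_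
  rw [← lintegral_prod (f := fun p : Pt d × Pt d => ENNReal.ofReal (M ^ 2 *
    ((Real.pi * b) ^ ((d : ℝ) / 2) * Real.exp (-(Real.pi ^ 2 * ‖p.1 - p.2‖ ^ 2 * b)))))
    (by
      apply Measurable.aemeasurable
      fun_prop)]
  refine lintegral_mono_ae ?_
  filter_upwards [hMM] with p hp
  simp only [hP]
  rw [integral_const_mul, gauss_ft d b hb, ← ofReal_norm]
  apply ENNReal.ofReal_le_ofReal
  rw [norm_mul, norm_mul, Complex.norm_real, Complex.norm_real, Complex.norm_real,
    Real.norm_eq_abs, Real.norm_eq_abs, Real.norm_of_nonneg (by positivity)]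
  gcongr

lemma lower_gamma (q r : ℝ) (hq : 0 < q) (hr : 0 < r) :
    ENNReal.ofReal (r ^ (-q)) ≤ ENNReal.ofReal ((2 : ℝ) ^ (q + 1) * Real.exp 1) *
      ∫⁻ b in Ioi (0 : ℝ), ENNReal.ofReal (b ^ (-q - 1)) * ENNReal.ofReal (Real.exp (-(r / b))) := by
  have h1 : ENNReal.ofReal ((2 * r) ^ (-q - 1) * Real.exp (-1)) * ENNReal.ofReal r ≤
      ∫⁻ b in Ioi (0 : ℝ), ENNReal.ofReal (b ^ (-q - 1)) * ENNReal.ofReal (Real.exp (-(r / b))) := by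
    have h2 : ∫⁻ b in Ioc r (2 * r), ENNReal.ofReal ((2 * r) ^ (-q - 1) * Real.exp (-1)) ≤
        ∫⁻ b in Ioc r (2 * r),
          ENNReal.ofReal (b ^ (-q - 1)) * ENNReal.ofReal (Real.exp (-(r / b))) := by
      refine setLIntegral_mono' measurableSet_Ioc fun b hb => ?_
      have hb0 : 0 < b := hr.trans hb.1
      rw [← ENNReal.ofReal_mul (by positivity)]
      apply ENNReal.ofReal_le_ofReal
      have h3 : (2 * r) ^ (-q - 1) ≤ b ^ (-q - 1) :=
        Real.rpow_le_rpow_of_nonpos hb0 hb.2 (by linarith)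
      have h4 : Real.exp (-1) ≤ Real.exp (-(r / b)) := by
        apply Real.exp_le_exp.2
        have : r / b ≤ 1 := (div_le_one hb0).2 hb.1.le
        linarith
      gcongr
    rw [setLIntegral_const, Real.volume_Ioc] at h2
    have e : 2 * r - r = r := by ring
    rw [e] at h2
    refine h2.trans (lintegral_mono_set fun b hb => hr.trans hb.1)
  refine le_trans (le_of_eq ?_) (mul_le_mul_right h1 _)
  rw [← ENNReal.ofReal_mul (by positivity), ← ENNReal.ofReal_mul (by positivity)]
  congr 1
  have h5 : Real.exp 1 * Real.exp (-1) = 1 := by rw [← Real.exp_add]; simp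
  have h6 : (2 : ℝ) ^ (q + 1) * 2 ^ (-q - 1) = 1 := by
    rw [← Real.rpow_add (by norm_num)]; ring_nf; simp
  have h7 : r ^ (-q - 1) * r = r ^ (-q) := by
    nth_rewrite 2 [← Real.rpow_one r]
    rw [← Real.rpow_add hr]; ring_nf
  rw [Real.mul_rpow (by norm_num) hr.le]
  calc r ^ (-q) = (2 ^ (q + 1) * 2 ^ (-q - 1)) * (Real.exp 1 * Real.exp (-1)) *
        (r ^ (-q - 1) * r) := by rw [h5, h6, h7]; ring
    _ = _ := by ring

lemma upper_gamma (a r : ℝ) (ha : 0 < a) (hr : 0 < r) :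
    ∫⁻ b in Ioi (0 : ℝ), ENNReal.ofReal (b ^ (a - 1) * Real.exp (-(r * b))) =
      ENNReal.ofReal ((1 / r) ^ a * Real.Gamma a) := by
  have h := Real.integral_rpow_mul_exp_neg_mul_Ioi ha hr
  have hpos : 0 < (1 / r) ^ a * Real.Gamma a := by
    have := Real.Gamma_pos_of_pos ha
    positivity
  have hi : Integrable (fun b : ℝ => b ^ (a - 1) * Real.exp (-(r * b)))
      (volume.restrict (Ioi 0)) := by
    by_contra hc
    rw [integral_undef hc] at h
    linarith
  rw [← h, ofReal_integral_eq_lintegral_ofReal hi]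
  filter_upwards [ae_restrict_mem measurableSet_Ioi] with b hb
  have : (0 : ℝ) < b := hb
  show (0 : ℝ) ≤ _
  positivity

lemma riesz_bound (d : ℕ) (μ : Measure (Pt d)) [IsFiniteMeasure μ] (h : Pt d → ℝ)
    (hm : Continuous h) (M : ℝ) (hM0 : 0 < M) (hM : ∀ᵐ x ∂μ, |h x| ≤ M)
    (s : ℝ) (hs0 : 0 < s) (hsd : s < d) (hI : energy d s μ < ⊤) :
    ∫⁻ ξ, ‖FTh d μ h ξ‖ₑ ^ 2 * ENNReal.ofReal (‖ξ‖ ^ (s - d)) < ⊤ := by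
  set q : ℝ := (d - s) / 2 with hq
  have hq0 : 0 < q := by rw [hq]; linarith
  have hFc := continuous_FTh d μ h hm M hM
  have hFm : Measurable (FTh d μ h) := hFc.measurable
  set c := ENNReal.ofReal ((2 : ℝ) ^ (q + 1) * Real.exp 1) with hc
  set C := M ^ 2 * Real.pi ^ ((d : ℝ) / 2) * ((1 / Real.pi ^ 2) ^ (s / 2) * Real.Gamma (s / 2)) with hC
  have hG := Real.Gamma_pos_of_pos (half_pos hs0)
  have hC0 : 0 < C := by positivity
  have step1 : ∀ ξ : Pt d, ENNReal.ofReal (‖ξ‖ ^ (s - d)) ≤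
      c * ∫⁻ b in Ioi (0 : ℝ), ENNReal.ofReal (b ^ (-q - 1)) *
        ENNReal.ofReal (Real.exp (-(‖ξ‖ ^ 2 / b))) := by
    intro ξ
    rcases eq_or_ne ξ 0 with rfl | hξ
    · rw [norm_zero, Real.zero_rpow (by linarith)]; simp
    · have hn : 0 < ‖ξ‖ := norm_pos_iff.2 hξ
      have := lower_gamma q (‖ξ‖ ^ 2) hq0 (by positivity)
      have e : (‖ξ‖ ^ 2) ^ (-q) = ‖ξ‖ ^ (s - d) := by
        rw [← Real.rpow_natCast, ← Real.rpow_mul hn.le]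
        congr 1; rw [hq]; push_cast; ring
      rwa [e] at this
  have step2 : ∀ p : Pt d × Pt d, ∫⁻ b in Ioi (0 : ℝ), ENNReal.ofReal (b ^ (-q - 1)) *
      ENNReal.ofReal (M ^ 2 * ((Real.pi * b) ^ ((d : ℝ) / 2) *
        Real.exp (-(Real.pi ^ 2 * ‖p.1 - p.2‖ ^ 2 * b)))) ≤
      ENNReal.ofReal C * edist p.1 p.2 ^ (-s) := by
    rintro ⟨x, y⟩
    simp only
    rcases eq_or_ne x y with rfl | hxy
    · rw [edist_self, ENNReal.zero_rpow_of_neg (by linarith), ENNReal.mul_top (by simpa using hC0)]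
      exact le_top
    · have hn : 0 < ‖x - y‖ := norm_pos_iff.2 (sub_ne_zero.2 hxy)
      have e1 : ∀ b ∈ Ioi (0 : ℝ), ENNReal.ofReal (b ^ (-q - 1)) *
          ENNReal.ofReal (M ^ 2 * ((Real.pi * b) ^ ((d : ℝ) / 2) *
          Real.exp (-(Real.pi ^ 2 * ‖x - y‖ ^ 2 * b)))) =
          ENNReal.ofReal (M ^ 2 * Real.pi ^ ((d : ℝ) / 2)) *
          ENNReal.ofReal (b ^ (s / 2 - 1) * Real.exp (-(Real.pi ^ 2 * ‖x - y‖ ^ 2 * b))) := by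
        intro b hb
        have hb0 : (0 : ℝ) < b := hb
        rw [← ENNReal.ofReal_mul (by positivity), ← ENNReal.ofReal_mul (by positivity)]
        congr 1
        have e2 : b ^ (s / 2 - 1) = b ^ (-q - 1) * b ^ ((d : ℝ) / 2) := by
          rw [← Real.rpow_add hb0]; congr 1; rw [hq]; ring
        rw [e2, Real.mul_rpow Real.pi_pos.le hb0.le]
        ring
      rw [setLIntegral_congr_fun measurableSet_Ioi e1, lintegral_const_mul' _ _ ENNReal.ofReal_ne_top,
        upper_gamma _ _ (half_pos hs0) (by positivity), edist_dist, dist_eq_norm,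
        ENNReal.ofReal_rpow_of_pos hn, ← ENNReal.ofReal_mul (by positivity),
        ← ENNReal.ofReal_mul (by positivity)]
      apply ENNReal.ofReal_le_ofReal
      apply le_of_eq
      have e3 : (1 / (Real.pi ^ 2 * ‖x - y‖ ^ 2)) ^ (s / 2) =
          (1 / Real.pi ^ 2) ^ (s / 2) * ‖x - y‖ ^ (-s) := by
        rw [← div_div, Real.div_rpow (by positivity) (by positivity), div_eq_mul_inv]
        congr 1
        rw [← Real.rpow_natCast, ← Real.rpow_mul hn.le, Real.rpow_neg hn.le]
        congr 2; push_cast; ring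
      rw [e3, hC]
      ring
  have hmeas1 : Measurable (Function.uncurry fun (ξ : Pt d) (b : ℝ) =>
      ‖FTh d μ h ξ‖ₑ ^ 2 * (ENNReal.ofReal (b ^ (-q - 1)) *
        ENNReal.ofReal (Real.exp (-(‖ξ‖ ^ 2 / b))))) := by
    simp only [Function.uncurry_def]
    have h1 : Measurable (fun p : Pt d × ℝ => FTh d μ h p.1) := hFm.comp measurable_fst
    fun_prop
  have hmeas2 : Measurable (Function.uncurry fun (b : ℝ) (p : Pt d × Pt d) =>
      ENNReal.ofReal (b ^ (-q - 1)) *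
      ENNReal.ofReal (M ^ 2 * ((Real.pi * b) ^ ((d : ℝ) / 2) *
        Real.exp (-(Real.pi ^ 2 * ‖p.1 - p.2‖ ^ 2 * b))))) := by
    simp only [Function.uncurry_def]
    fun_prop
  calc ∫⁻ ξ, ‖FTh d μ h ξ‖ₑ ^ 2 * ENNReal.ofReal (‖ξ‖ ^ (s - d))
      ≤ ∫⁻ ξ, c * ∫⁻ b in Ioi (0 : ℝ), ‖FTh d μ h ξ‖ₑ ^ 2 * (ENNReal.ofReal (b ^ (-q - 1)) *
        ENNReal.ofReal (Real.exp (-(‖ξ‖ ^ 2 / b)))) := by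
        refine lintegral_mono fun ξ => ?_
        rw [lintegral_const_mul' _ _ (by simp)]
        calc _ ≤ _ := mul_le_mul_right (step1 ξ) _
          _ = _ := by ring
    _ = c * ∫⁻ b in Ioi (0 : ℝ), ∫⁻ ξ, ‖FTh d μ h ξ‖ₑ ^ 2 * (ENNReal.ofReal (b ^ (-q - 1)) *
        ENNReal.ofReal (Real.exp (-(‖ξ‖ ^ 2 / b)))) := by
        rw [lintegral_const_mul' _ _ ENNReal.ofReal_ne_top,
          lintegral_lintegral_swap hmeas1.aemeasurable]
    _ ≤ c * ∫⁻ b in Ioi (0 : ℝ), ∫⁻ p, ENNReal.ofReal (b ^ (-q - 1)) *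
      ENNReal.ofReal (M ^ 2 * ((Real.pi * b) ^ ((d : ℝ) / 2) *
        Real.exp (-(Real.pi ^ 2 * ‖p.1 - p.2‖ ^ 2 * b)))) ∂(μ.prod μ) := by
        refine mul_le_mul_right ?_ _
        refine setLIntegral_mono' measurableSet_Ioi fun b hb => ?_
        have := gauss_bound d μ h hm M hM0.le hM b hb
        rw [← lintegral_prod (f := fun p : Pt d × Pt d => ENNReal.ofReal (M ^ 2 *
          ((Real.pi * b) ^ ((d : ℝ) / 2) * Real.exp (-(Real.pi ^ 2 * ‖p.1 - p.2‖ ^ 2 * b)))))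
          (by
            apply Measurable.aemeasurable
            fun_prop)] at this
        rw [lintegral_const_mul' _ _ ENNReal.ofReal_ne_top]
        refine le_trans (le_of_eq ?_) (mul_le_mul_right this _)
        rw [← lintegral_const_mul' _ _ ENNReal.ofReal_ne_top]
        refine lintegral_congr fun ξ => ?_
        ring
    _ = c * ∫⁻ p, (∫⁻ b in Ioi (0 : ℝ), ENNReal.ofReal (b ^ (-q - 1)) *
      ENNReal.ofReal (M ^ 2 * ((Real.pi * b) ^ ((d : ℝ) / 2) *
        Real.exp (-(Real.pi ^ 2 * ‖p.1 - p.2‖ ^ 2 * b))))) ∂(μ.prod μ) := by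
        rw [lintegral_lintegral_swap hmeas2.aemeasurable]
    _ ≤ c * ∫⁻ p, ENNReal.ofReal C * edist p.1 p.2 ^ (-s) ∂(μ.prod μ) := by
        refine mul_le_mul_right (lintegral_mono step2) _
    _ = c * (ENNReal.ofReal C * energy d s μ) := by
        rw [lintegral_const_mul' _ _ ENNReal.ofReal_ne_top, lintegral_prod]
        · rfl
        · apply Measurable.aemeasurable
          fun_prop
    _ < ⊤ := ENNReal.mul_lt_top ENNReal.ofReal_lt_top (ENNReal.mul_lt_top ENNReal.ofReal_lt_top hI)

lemma sobolev_one (g g' : ℝ → ℂ) (hg : ∀ t, HasDerivAt g (g' t) t) (N : ℝ → ℝ) (hN : Continuous N)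
    (hle : ∀ u, 2 * ‖g u‖ ^ 2 + ‖g' u‖ ^ 2 ≤ N u) (t : ℝ) :
    ENNReal.ofReal (‖g t‖ ^ 2) ≤ ∫⁻ u in Ioc t (t + 1), ENNReal.ofReal (N u) := by
  have hd : ∀ u, HasDerivAt (fun u => -((1 - (u - t)) * ‖g u‖ ^ 2))
      (-((-1) * ‖g u‖ ^ 2 + (1 - (u - t)) * (2 * inner ℝ (g u) (g' u)))) u := by
    intro u
    have h1 : HasDerivAt (fun u : ℝ => 1 - (u - t)) (-1) u := by
      simpa using ((hasDerivAt_id u).sub_const t).const_sub 1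
    exact (h1.mul (hg u).norm_sq).neg
  have key := intervalIntegral.sub_le_integral_of_hasDeriv_right_of_le (a := t) (b := t + 1)
    (g := fun u => -((1 - (u - t)) * ‖g u‖ ^ 2)) (φ := N) (by linarith)
    (fun u _ => (hd u).continuousAt.continuousWithinAt)
    (fun u _ => (hd u).hasDerivWithinAt)
    (hN.continuousOn.integrableOn_compact isCompact_Icc)
    (by
      intro u hu
      refine le_trans ?_ (hle u)
      have h1 : |inner ℝ (g u) (g' u)| ≤ ‖g u‖ * ‖g' u‖ := abs_real_inner_le_norm _ _
      have h2 := abs_le.1 h1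
      have h3 : 0 ≤ 1 - (u - t) := by linarith [hu.2]
      have h4 : 1 - (u - t) ≤ 1 := by linarith [hu.1]
      have h5 : -(inner ℝ (g u) (g' u)) * (1 - (u - t)) ≤ (‖g u‖ * ‖g' u‖) * 1 := by
        refine (mul_le_mul_of_nonneg_right (by linarith [h2.1] : _ ≤ ‖g u‖ * ‖g' u‖) h3).trans ?_
        exact mul_le_mul_of_nonneg_left h4 (by positivity)
      nlinarith [sq_nonneg (‖g u‖ - ‖g' u‖)])
  have key2 : ‖g t‖ ^ 2 ≤ ∫ u in t..(t + 1), N u := by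
    simpa using key
  refine (ENNReal.ofReal_le_ofReal key2).trans ?_
  rw [intervalIntegral.integral_of_le (by linarith), ofReal_integral_eq_lintegral_ofReal]
  · exact (hN.continuousOn.integrableOn_compact isCompact_Icc).mono_set Ioc_subset_Icc_self
  · refine Filter.Eventually.of_forall fun u => ?_
    exact le_trans (by positivity) (hle u)

lemma ft_deriv (d : ℕ) (μ : Measure (Pt d)) [IsFiniteMeasure μ] (R : ℝ)
    (hR : ∀ᵐ x ∂μ, ‖x‖ ≤ R) (ω : Pt d) (t : ℝ) :
    HasDerivAt (fun t : ℝ => FTh d μ (fun _ => 1) (t • ω))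
      (∑ j, (-(2 * Real.pi * ω j * Complex.I)) * FTh d μ (fun x => x j) (t • ω)) t := by
  have hj : ∀ j, ∀ᵐ x ∂μ, |x j| ≤ R := fun j => by
    filter_upwards [hR] with x hx
    exact (PiLp.norm_apply_le x j).trans hx
  have hk : ∀ ξ, Continuous (fun x => kerE d x ξ) := fun ξ =>
    (continuous_kerE d).comp (Continuous.prodMk_left ξ)
  have hintg : ∀ j, Integrable (fun x => ((x j : ℝ) : ℂ) * kerE d x (t • ω)) μ := by
    intro j
    refine (integrable_const R).mono' ?_ ?_
    · have := hk (t • ω)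
      apply Continuous.aestronglyMeasurable
      fun_prop
    · filter_upwards [hj j] with x hx
      rw [norm_mul, norm_kerE]; simpa using hx
  have e : (∑ j, (-(2 * Real.pi * ω j * Complex.I)) * FTh d μ (fun x => x j) (t • ω)) =
      ∫ x, ((-(2 * Real.pi * (inner ℝ x ω : ℝ)) : ℝ) * Complex.I) * kerE d x (t • ω) ∂μ := by
    unfold FTh
    simp_rw [← integral_const_mul]
    rw [← integral_finsetSum _ (fun j _ => (hintg j).const_mul _)]
    congr 1; ext x
    rw [PiLp.inner_apply]
    push_cast
    simp only [RCLike.inner_apply, conj_trivial, Complex.ofReal_mul, Finset.mul_sum, Finset.sum_mul, ← Finset.sum_neg_distrib]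
    refine Finset.sum_congr rfl fun j _ => ?_
    ring
  rw [e]
  unfold FTh
  refine (hasDerivAt_integral_of_dominated_loc_of_deriv_le (s := univ)
    (bound := fun _ => 2 * Real.pi * (R * ‖ω‖))
    (F := fun (t : ℝ) x => ((1 : ℝ) : ℂ) * kerE d x (t • ω))
    (F' := fun (t : ℝ) x =>
      ((-(2 * Real.pi * (inner ℝ x ω : ℝ)) : ℝ) * Complex.I) * kerE d x (t • ω))
    Filter.univ_mem ?_ ?_ ?_ ?_ (integrable_const _) ?_).2
  · refine Filter.Eventually.of_forall fun u => ?_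
    have := hk (u • ω)
    apply Continuous.aestronglyMeasurable
    fun_prop
  · refine (integrable_const (1 : ℝ)).mono' ?_ ?_
    · have := hk (t • ω)
      apply Continuous.aestronglyMeasurable
      fun_prop
    · refine Filter.Eventually.of_forall fun x => ?_
      rw [norm_mul, norm_kerE]; simp
  · have := hk (t • ω)
    apply Continuous.aestronglyMeasurable
    fun_prop
  · filter_upwards [hR] with x hx u _
    rw [norm_mul, norm_kerE, norm_mul, Complex.norm_real, Complex.norm_I, Real.norm_eq_abs,
      abs_neg, abs_mul, abs_of_pos (by positivity : (0 : ℝ) < 2 * Real.pi), mul_one, mul_one]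
    gcongr
    exact (abs_real_inner_le_norm _ _).trans (by gcongr)
  · refine Filter.Eventually.of_forall fun x u _ => ?_
    have h1 : HasDerivAt (fun u : ℝ => (((-(2 * Real.pi * (inner ℝ x ω : ℝ)) : ℝ) * Complex.I) * (u : ℂ)))
        ((-(2 * Real.pi * (inner ℝ x ω : ℝ)) : ℝ) * Complex.I) u := by
      simpa using (Complex.ofRealCLM.hasDerivAt (x := u)).const_mul
        ((-(2 * Real.pi * (inner ℝ x ω : ℝ)) : ℝ) * Complex.I)
    have h2 := h1.cexp
    have h3 : ∀ v : ℝ, kerE d x (v • ω) =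
        Complex.exp (((-(2 * Real.pi * (inner ℝ x ω : ℝ)) : ℝ) * Complex.I) * (v : ℂ)) := by
      intro v
      unfold kerE
      rw [real_inner_smul_right]
      congr 1
      push_cast; ring
    simp only [h3, Complex.ofReal_one, one_mul]
    exact h2.congr_deriv (mul_comm _ _)

lemma polar_lint (d : ℕ) (hd : 1 ≤ d) (H : Pt d → ℝ≥0∞) (hH : Measurable H) :
    ∫⁻ ξ, H ξ = ∫⁻ t in Ioi (0 : ℝ), ENNReal.ofReal (t ^ (d - 1)) *
      ∫⁻ ω : sphere (0 : Pt d) 1, H (t • (ω : Pt d)) ∂(sphM d) := by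
  have : Nonempty (Fin d) := ⟨⟨0, hd⟩⟩
  have : Nontrivial (Pt d) := inferInstance
  have : IsFiniteMeasure (sphM d) := by unfold sphM; infer_instance
  have hmp := (volume : Measure (Pt d)).measurePreserving_homeomorphUnitSphereProd
  rw [finrank_euclideanSpace_fin] at hmp
  have hK : Measurable (fun p : sphere (0 : Pt d) 1 × Ioi (0 : ℝ) => H ((p.2 : ℝ) • (p.1 : Pt d))) := by
    apply hH.comp
    fun_prop
  have h1 := hmp.lintegral_comp hK
  have h2 : ∫⁻ ξ, H ξ = ∫⁻ x : ({0}ᶜ : Set (Pt d)), H (x : Pt d) ∂(volume.comap Subtype.val) := by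
    rw [lintegral_subtype_comap (measurableSet_singleton _).compl,
      restrict_compl_singleton]
  rw [h2]
  have h3 : ∀ x : ({0}ᶜ : Set (Pt d)), H (((homeomorphUnitSphereProd (Pt d) x).2 : ℝ) •
      ((homeomorphUnitSphereProd (Pt d) x).1 : Pt d)) = H x := by
    intro x
    congr 1
    have : (x : Pt d) ≠ 0 := x.2
    simp [smul_smul, this]
  simp_rw [h3] at h1
  rw [h1, lintegral_prod_symm _ hK.aemeasurable]
  have hK2 : Measurable (fun t : Ioi (0 : ℝ) => ∫⁻ ω : sphere (0 : Pt d) 1, H ((t : ℝ) • (ω : Pt d)) ∂(sphM d)) :=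
    Measurable.lintegral_prod_left' (μ := sphM d) hK
  change ∫⁻ t : Ioi (0 : ℝ), ∫⁻ ω : sphere (0 : Pt d) 1, H ((t : ℝ) • (ω : Pt d)) ∂(sphM d)
    ∂(Measure.volumeIoiPow (d - 1)) = _
  rw [Measure.volumeIoiPow, lintegral_withDensity_eq_lintegral_mul _ (by fun_prop) hK2]
  rw [← lintegral_subtype_comap measurableSet_Ioi]
  rfl

lemma energy_mono (d : ℕ) (μ : Measure (Pt d)) [IsFiniteMeasure μ] (s s' : ℝ) (h0 : 0 < s')
    (h : s' ≤ s) (hI : energy d s μ < ⊤) : energy d s' μ < ⊤ := by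
  have h1 : energy d s' μ ≤ ∫⁻ x, ∫⁻ y, (1 + edist x y ^ (-s)) ∂μ ∂μ := by
    refine lintegral_mono fun x => lintegral_mono fun y => ?_
    rcases le_total (edist x y) 1 with h2 | h2
    · exact (ENNReal.rpow_le_rpow_of_exponent_ge h2 (by linarith)).trans le_add_self
    · exact (ENNReal.rpow_le_one_of_one_le_of_neg h2 (by linarith)).trans le_self_add
  refine h1.trans_lt ?_
  simp_rw [lintegral_add_left (measurable_const (a := (1 : ℝ≥0∞)))]
  rw [lintegral_add_left measurable_const]
  refine ENNReal.add_lt_top.2 ⟨?_, hI⟩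
  simp only [lintegral_const, one_mul]
  exact ENNReal.mul_lt_top (measure_lt_top _ _) (measure_lt_top _ _)

lemma mattila_core (d : ℕ) (hd : 2 ≤ d) (μ : Measure (Pt d)) [IsFiniteMeasure μ] (R : ℝ)
    (hR0 : 0 < R) (hR : ∀ᵐ x ∂μ, ‖x‖ ≤ R)
    (s : ℝ) (hs : ((d : ℝ) + 1) / 2 < s) (hsd : s < d) (hI : energy d s μ < ⊤) :
    mattila d μ < ⊤ := by
  have hd2 : (2 : ℝ) ≤ d := by exact_mod_cast hd
  have hs0 : 0 < s := by linarith
  have hsf : IsFiniteMeasure (sphM d) := by unfold sphM; infer_instance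
  have hj : ∀ j, ∀ᵐ x ∂μ, |x j| ≤ R := fun j => by
    filter_upwards [hR] with x hx
    exact (PiLp.norm_apply_le x j).trans hx
  have h1b : ∀ᵐ x ∂μ, |(fun _ : Pt d => (1 : ℝ)) x| ≤ 1 := by simp
  have hc1 : Continuous (FTh d μ (fun _ => 1)) := continuous_FTh d μ _ continuous_const 1 h1b
  have hcj : ∀ j, Continuous (FTh d μ (fun x => x j)) := fun j =>
    continuous_FTh d μ _ (by fun_prop) R (hj j)
  have hft : ∀ ξ, ftM d μ ξ = FTh d μ (fun _ => 1) ξ := by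
    intro ξ; unfold ftM FTh kerE; simp
  set A : ℝ := (2 * Real.pi) ^ 2 * d with hA
  have hA0 : 0 ≤ A := by positivity
  set G : Pt d → ℝ := fun ξ => 2 * ‖FTh d μ (fun _ => 1) ξ‖ ^ 2 +
    ∑ j, A * ‖FTh d μ (fun x => x j) ξ‖ ^ 2 with hG
  have hGc : Continuous G := by
    simp only [hG]
    fun_prop
  set Φ : ℝ → ℝ≥0∞ := fun t => ∫⁻ ω : sphere (0 : Pt d) 1, ENNReal.ofReal (G (t • (ω : Pt d))) ∂(sphM d)
    with hΦ
  set E : ℝ≥0∞ := ∫⁻ t in Ioi (0 : ℝ), ENNReal.ofReal (t ^ (s - 1)) * Φ t with hE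
  have hEtop : E < ⊤ := by
    have h1 : ∫⁻ ξ, ENNReal.ofReal (G ξ) * ENNReal.ofReal (‖ξ‖ ^ (s - d)) < ⊤ := by
      have e : ∀ ξ, ENNReal.ofReal (G ξ) * ENNReal.ofReal (‖ξ‖ ^ (s - d)) =
          2 * (‖FTh d μ (fun _ => 1) ξ‖ₑ ^ 2 * ENNReal.ofReal (‖ξ‖ ^ (s - d))) +
          ∑ j, ENNReal.ofReal A * (‖FTh d μ (fun x => x j) ξ‖ₑ ^ 2 *
            ENNReal.ofReal (‖ξ‖ ^ (s - d))) := by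
        intro ξ
        simp only [hG]
        rw [ENNReal.ofReal_add (by positivity) (Finset.sum_nonneg fun j _ => by positivity),
          ENNReal.ofReal_sum_of_nonneg (fun j _ => by positivity), add_mul, Finset.sum_mul]
        congr 1
        · rw [ENNReal.ofReal_mul (by norm_num), ENNReal.ofReal_pow (by positivity), ofReal_norm,
            mul_assoc]
          simp
        · refine Finset.sum_congr rfl fun j _ => ?_
          rw [ENNReal.ofReal_mul hA0, ENNReal.ofReal_pow (by positivity), ofReal_norm, mul_assoc]
      simp_rw [e]
      have hmj : ∀ j, Measurable (fun ξ : Pt d => ENNReal.ofReal A * (‖FTh d μ (fun x => x j) ξ‖ₑ ^ 2 *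
            ENNReal.ofReal (‖ξ‖ ^ (s - d)))) := by
        intro j
        have := (hcj j).measurable
        fun_prop
      rw [lintegral_add_right _ (Finset.measurable_fun_sum _ fun j _ => hmj j),
        lintegral_finsetSum _ (fun j _ => hmj j),
        lintegral_const_mul' _ _ (by norm_num)]
      refine ENNReal.add_lt_top.2 ⟨ENNReal.mul_lt_top (by norm_num)
        (riesz_bound d μ _ continuous_const 1 one_pos h1b s hs0 hsd hI), ?_⟩
      refine ENNReal.sum_lt_top.2 fun j _ => ?_
      rw [lintegral_const_mul' _ _ ENNReal.ofReal_ne_top]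
      exact ENNReal.mul_lt_top ENNReal.ofReal_lt_top
        (riesz_bound d μ _ (by fun_prop) R hR0 (hj j) s hs0 hsd hI)
    rw [polar_lint d (by lia) _ (by have := hGc.measurable; fun_prop)] at h1
    refine lt_of_le_of_lt (le_of_eq ?_) h1
    refine setLIntegral_congr_fun measurableSet_Ioi fun t ht => ?_
    have ht0 : (0 : ℝ) < t := ht
    have e2 : ∀ ω : sphere (0 : Pt d) 1, ‖t • (ω : Pt d)‖ = t := by
      intro ω
      rw [norm_smul, norm_eq_of_mem_sphere, Real.norm_of_nonneg ht0.le, mul_one]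
    simp only [e2]
    rw [lintegral_mul_const' _ _ ENNReal.ofReal_ne_top, mul_comm (lintegral _ _), ← mul_assoc,
      ← ENNReal.ofReal_mul (by positivity)]
    congr 2
    rw [← Real.rpow_natCast, ← Real.rpow_add ht0]
    congr 1
    rw [Nat.cast_sub (by lia)]
    push_cast; ring
  have hFΦ : ∀ t, sphAvg d μ t ≤ Φ t := by
    intro t
    refine lintegral_mono fun ω => ?_
    rw [hft]
    have : ((‖FTh d μ (fun _ => 1) (t • (ω : Pt d))‖₊ : ℝ≥0∞)) ^ 2 =
        ENNReal.ofReal (‖FTh d μ (fun _ => 1) (t • (ω : Pt d))‖ ^ 2) := by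
      rw [ENNReal.ofReal_pow (by positivity), ofReal_norm]; rfl
    simp only [this]
    apply ENNReal.ofReal_le_ofReal
    simp only [hG]
    have h3 : 0 ≤ ∑ j, A * ‖FTh d μ (fun x => x j) (t • (ω : Pt d))‖ ^ 2 :=
      Finset.sum_nonneg fun j _ => by positivity
    nlinarith [sq_nonneg ‖FTh d μ (fun _ => 1) (t • (ω : Pt d))‖]
  have hFavg : ∀ t, sphAvg d μ t ≤ ∫⁻ u in Ioc t (t + 1), Φ u := by
    intro t
    have hsw : ∫⁻ u in Ioc t (t + 1), Φ u = ∫⁻ ω : sphere (0 : Pt d) 1,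
        (∫⁻ u in Ioc t (t + 1), ENNReal.ofReal (G (u • (ω : Pt d)))) ∂(sphM d) := by
      simp only [hΦ]
      rw [lintegral_lintegral_swap]
      apply Measurable.aemeasurable
      simp only [Function.uncurry_def]
      apply ENNReal.measurable_ofReal.comp
      apply hGc.measurable.comp
      fun_prop
    rw [hsw]
    refine lintegral_mono fun ω => ?_
    rw [hft]
    have : ((‖FTh d μ (fun _ => 1) (t • (ω : Pt d))‖₊ : ℝ≥0∞)) ^ 2 =
        ENNReal.ofReal (‖FTh d μ (fun _ => 1) (t • (ω : Pt d))‖ ^ 2) := by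
      rw [ENNReal.ofReal_pow (by positivity), ofReal_norm]; rfl
    simp only [this]
    refine sobolev_one (fun t : ℝ => FTh d μ (fun _ => 1) (t • (ω : Pt d))) _
      (fun t => ft_deriv d μ R hR ω t) (fun u => G (u • (ω : Pt d)))
      (hGc.comp (by fun_prop)) ?_ t
    intro u
    simp only [hG]
    gcongr
    rw [← Finset.mul_sum]
    have hω : ∀ j, |(ω : Pt d) j| ≤ 1 := fun j => by
      have := PiLp.norm_apply_le (ω : Pt d) j
      rwa [norm_eq_of_mem_sphere] at this
    have h1 : ‖∑ j, (-(2 * Real.pi * (ω : Pt d) j * Complex.I)) *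
        FTh d μ (fun x => x j) (u • (ω : Pt d))‖ ≤
        2 * Real.pi * ∑ j, ‖FTh d μ (fun x => x j) (u • (ω : Pt d))‖ := by
      refine (norm_sum_le _ _).trans ?_
      rw [Finset.mul_sum]
      refine Finset.sum_le_sum fun j _ => ?_
      rw [norm_mul]
      gcongr
      rw [norm_neg, norm_mul, norm_mul, norm_mul, Complex.norm_I, Complex.norm_real,
        Complex.norm_real, Real.norm_eq_abs, Real.norm_eq_abs, abs_of_pos Real.pi_pos]
      simp only [Complex.norm_ofNat, mul_one]
      have := hω j
      have h2 : 2 * Real.pi * |(ω : Pt d) j| ≤ 2 * Real.pi * 1 := by gcongr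
      linarith
    have h2 := sq_sum_le_card_mul_sum_sq (s := (Finset.univ : Finset (Fin d)))
      (f := fun j => ‖FTh d μ (fun x => x j) (u • (ω : Pt d))‖)
    simp only [Finset.card_univ, Fintype.card_fin] at h2
    calc _ ≤ (2 * Real.pi * ∑ j, ‖FTh d μ (fun x => x j) (u • (ω : Pt d))‖) ^ 2 := by gcongr
      _ = (2 * Real.pi) ^ 2 * (∑ j, ‖FTh d μ (fun x => x j) (u • (ω : Pt d))‖) ^ 2 := by ring
      _ ≤ (2 * Real.pi) ^ 2 * (d * ∑ j, ‖FTh d μ (fun x => x j) (u • (ω : Pt d))‖ ^ 2) := by gcongr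
      _ = _ := by rw [hA]; ring
  have hdecay : ∀ t, 0 < t → sphAvg d μ t ≤ ENNReal.ofReal (t ^ (1 - s)) * E := by
    intro t ht
    refine (hFavg t).trans ?_
    calc ∫⁻ u in Ioc t (t + 1), Φ u ≤ ∫⁻ u in Ioc t (t + 1),
          ENNReal.ofReal (t ^ (1 - s)) * (ENNReal.ofReal (u ^ (s - 1)) * Φ u) := by
          refine setLIntegral_mono' measurableSet_Ioc fun u hu => ?_
          rw [← mul_assoc, ← ENNReal.ofReal_mul (by positivity)]
          have : 1 ≤ t ^ (1 - s) * u ^ (s - 1) := by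
            have h1 : t ^ (s - 1) ≤ u ^ (s - 1) :=
              Real.rpow_le_rpow ht.le hu.1.le (by linarith)
            have h2 : t ^ (1 - s) * t ^ (s - 1) = 1 := by
              rw [← Real.rpow_add ht]; ring_nf; simp
            calc (1 : ℝ) = t ^ (1 - s) * t ^ (s - 1) := h2.symm
              _ ≤ _ := by gcongr
          calc Φ u = 1 * Φ u := (one_mul _).symm
            _ ≤ _ := by
              gcongr
              simpa using this
      _ = ENNReal.ofReal (t ^ (1 - s)) * ∫⁻ u in Ioc t (t + 1),
          (ENNReal.ofReal (u ^ (s - 1)) * Φ u) := lintegral_const_mul' _ _ ENNReal.ofReal_ne_top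
      _ ≤ _ := by
          gcongr
          exact lintegral_mono_set fun u hu => ht.trans hu.1
  set B : ℝ≥0∞ := (μ univ) ^ 2 * sphM d univ with hB
  have hBtop : B < ⊤ := ENNReal.mul_lt_top (ENNReal.pow_lt_top (measure_lt_top _ _)) (measure_lt_top _ _)
  have hFB : ∀ t, sphAvg d μ t ≤ B := by
    intro t
    rw [hB, ← lintegral_const]
    refine lintegral_mono fun ω => ?_
    gcongr
    refine (enorm_integral_le_lintegral_enorm _).trans (le_of_eq ?_)
    rw [← lintegral_one]
    refine lintegral_congr fun x => ?_
    rw [← ofReal_norm, Complex.norm_exp_ofReal_mul_I]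
    simp
  have hpt : ∀ t ∈ Ioi (0 : ℝ), sphAvg d μ t ^ 2 * ENNReal.ofReal (t ^ ((d : ℝ) - 1)) ≤
      (Ioc (0 : ℝ) 1).indicator (fun _ => B ^ 2) t + E * (ENNReal.ofReal (t ^ (s - 1)) * Φ t) := by
    intro t ht
    have ht0 : (0 : ℝ) < t := ht
    rcases le_or_gt t 1 with h | h
    · rw [indicator_of_mem (show t ∈ Ioc (0 : ℝ) 1 from ⟨ht0, h⟩)]
      refine le_trans ?_ le_self_add
      calc _ ≤ B ^ 2 * 1 := by
            gcongr
            · exact hFB t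
            · simpa using Real.rpow_le_one ht0.le h (by linarith)
        _ = _ := mul_one _
    · refine le_trans ?_ le_add_self
      calc sphAvg d μ t ^ 2 * ENNReal.ofReal (t ^ ((d : ℝ) - 1))
          ≤ (ENNReal.ofReal (t ^ (1 - s)) * E * Φ t) * ENNReal.ofReal (t ^ ((d : ℝ) - 1)) := by
            rw [sq]
            gcongr
            · exact hdecay t ht0
            · exact hFΦ t
        _ = E * ((ENNReal.ofReal (t ^ (1 - s)) * ENNReal.ofReal (t ^ ((d : ℝ) - 1))) * Φ t) := by ring
        _ ≤ _ := by
            gcongr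
            rw [← ENNReal.ofReal_mul (by positivity), ← Real.rpow_add ht0]
            apply ENNReal.ofReal_le_ofReal
            exact Real.rpow_le_rpow_of_exponent_le h.le (by linarith)
  unfold mattila
  refine (setLIntegral_mono' measurableSet_Ioi hpt).trans_lt ?_
  rw [lintegral_add_left (measurable_const.indicator measurableSet_Ioc),
    lintegral_const_mul' _ _ hEtop.ne]
  refine ENNReal.add_lt_top.2 ⟨?_, ENNReal.mul_lt_top hEtop hEtop⟩
  rw [lintegral_indicator measurableSet_Ioc, lintegral_const]
  refine ENNReal.mul_lt_top (ENNReal.pow_lt_top hBtop) ?_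
  rw [Measure.restrict_apply_univ]
  refine (Measure.restrict_apply_le _ _).trans_lt ?_
  simp

theorem stmt14 (d : ℕ) (hd : 2 ≤ d)
    (μ : Measure (Pt d)) [IsFiniteMeasure μ]
    (K : Set (Pt d)) (hK : IsCompact K) (hsupp : μ Kᶜ = 0)
    (s : ℝ) (hs : ((d : ℝ) + 1) / 2 < s) (hI : energy d s μ < ⊤) :
    mattila d μ < ⊤ := by
  have hd2 : (2 : ℝ) ≤ d := by exact_mod_cast hd
  obtain ⟨R, hR0, hR⟩ := hK.isBounded.exists_pos_norm_le
  have hRae : ∀ᵐ x ∂μ, ‖x‖ ≤ R := by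
    have : ∀ᵐ x ∂μ, x ∈ K := hsupp
    filter_upwards [this] with x hx using hR x hx
  rcases lt_or_ge s d with h | h
  · exact mattila_core d hd μ R hR0 hRae s hs h hI
  · refine mattila_core d hd μ R hR0 hRae ((3 * d + 1) / 4) (by linarith) (by linarith) ?_
    exact energy_mono d μ s _ (by positivity) (by linarith) hI
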